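/- Let C be a nonempty uniquely decipherable code over a finite nonempty alphabet A with r elements, and let m be the maximum length of a string in C. Then for every positive integer k, K(C)^k ≤ mk − k + 1. -/

import Mathlib

/-! Mathlib's Kraft–McMillan inequality gives `K(C) ≤ 1`, hence `K(C)^k ≤ 1`. A uniquely decipherable
code does not contain the empty string, so `1 ≤ m` and the right-hand side `(m - 1) k + 1` is at
least `1`. -/

/-- A finite set `C` of strings over `A` is a uniquely decipherable code if the
concatenation map is injective on finite sequences of elements of `C`. -/
def UniquelyDecipherable {A : Type*} (C : Finset (List A)) : Prop :=
  ∀ u v : List (List A), (∀ x ∈ u, x ∈ C) → (∀ x ∈ v, x ∈ C) →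
    u.flatten = v.flatten → u = v

/-- The Kraft sum `K(C) = Σ_{x ∈ C} r^{-len(x)}` where `r` is the size of the alphabet. -/
noncomputable def kraftSum {A : Type*} [Fintype A] (C : Finset (List A)) : ℝ :=
  ∑ x ∈ C, (Fintype.card A : ℝ) ^ (-(x.length : ℤ))

/-- If `C` is a nonempty uniquely decipherable code and `m` is the maximum length of a
string in `C`, then `K(C)^k ≤ mk - k + 1` for every positive integer `k`. -/
theorem kraft_pow_le {A : Type*} [Fintype A] [Nonempty A]
    (C : Finset (List A)) (hCne : C.Nonempty) (hC : UniquelyDecipherable C)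
    (m : ℕ) (hm : ∃ x ∈ C, x.length = m) (hmax : ∀ x ∈ C, x.length ≤ m)
    (k : ℕ) (hk : 0 < k) :
    kraftSum C ^ k ≤ (m : ℝ) * k - k + 1 := by
  have hU : InformationTheory.UniquelyDecodable (C : Set (List A)) := hC
  have hK : kraftSum C ≤ 1 := by
    simpa [kraftSum] using InformationTheory.kraft_mcmillan_inequality hU
  have hK0 : 0 ≤ kraftSum C := Finset.sum_nonneg fun x _ => by positivity
  have hm1 : (1 : ℝ) ≤ m := by
    obtain ⟨x, hx, rfl⟩ := hm
    have hne : x ≠ [] := fun h => hU.epsilon_not_mem (h ▸ hx)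
    exact_mod_cast List.length_pos_iff.mpr hne
  have hk0 : (0 : ℝ) ≤ k := k.cast_nonneg
  calc kraftSum C ^ k ≤ 1 := pow_le_one₀ hK0 hK
    _ ≤ (m : ℝ) * k - k + 1 := by nlinarith
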